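/- arXiv:math/0410252 — 3 statements merged into one kernel-verified Lean document; each statement's English description precedes it below -/
import Mathlib

section
/- Let f, g ∈ ℂ[x_0,…,x_4] be homogeneous of degrees n and 2r respectively, with n ≥ 2, r ≥ 3 and 2r ≥ n, such that the hypersurface {f = 0} ⊂ ℙ⁴ is smooth. Let S = {f = g = 0} ⊂ ℙ⁴(ℂ) and suppose that Sing(S) is finite with 4·|Sing(S)| ≤ (2r+n−2)·r. Then the singular points of S impose independent linear conditions on homogeneous polynomials of degree 3r+n−5: for every point P ∈ Sing(S) there exists a homogeneous polynomial of degree 3r+n−5 in ℂ[x_0,…,x_4] vanishing at every point of Sing(S) \ {P} and not vanishing at P. -/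
open MvPolynomial

noncomputable section

/-- The projective space `ℙ^N(ℂ)`. -/
abbrev ProjPt (N : ℕ) := Projectivization ℂ (Fin (N + 1) → ℂ)

/-- A (homogeneous) polynomial vanishes at a point of projective space. -/
def VanishesAt {N : ℕ} (F : MvPolynomial (Fin (N + 1)) ℂ) (p : ProjPt N) : Prop :=
  eval p.rep F = 0

/-- The `2 × 5` Jacobian matrix of `f, g` evaluated at `v`. -/
def Jac5 (f g : MvPolynomial (Fin 5) ℂ) (v : Fin 5 → ℂ) : Matrix (Fin 2) (Fin 5) ℂ :=
  Matrix.of ![fun j : Fin 5 => eval v (pderiv j f), fun j : Fin 5 => eval v (pderiv j g)]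

/-- The singular locus of `S = {f = g = 0} ⊂ ℙ⁴(ℂ)`: points of `S` where the Jacobian
matrix has rank at most `1`. -/
def SingCI5 (f g : MvPolynomial (Fin 5) ℂ) : Set (ProjPt 4) :=
  {p : ProjPt 4 | eval p.rep f = 0 ∧ eval p.rep g = 0 ∧ (Jac5 f g p.rep).rank ≤ 1}

/-!
Filter the algebra of functions on a finite set `Γ` of points by the degree of representatives
(after normalising by a linear form that vanishes nowhere on `Γ`), and let `h` be the Hilbert
function of the associated graded algebra, so that the values of `h` add up to `|Γ|`. If
`h (j + 1) ≤ j + 1`, multiplication by a suitable linear form maps degree `j` onto degree `j + 1`,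
hence degree `j + 1` onto degree `j + 2`, and so `h (j + 2) ≤ h (j + 1)`. If equality holds and the
values are positive, the multiplications by all linear forms become commuting endomorphisms of one
space; a common eigenvector of their transposes is a point outside `Γ` at which every form of degree
`j + 2` vanishing on `Γ` is zero. This is impossible when `Γ` is cut out by forms of degree
`m ≤ j + 2`, so from there on `h` decreases strictly. If `Γ` failed to impose independent conditions
on forms of degree `m + r - 3`, with `r ≤ m`, then `h` would be positive up to degree `m + r - 2`,
and pairing degree `j` with degree `m + j` would give `r * m ≤ |Γ|`.

The singular points of `{f = g = 0}` are cut out in degree `m = deg f + deg g - 2`, by the minors of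
the Jacobian matrix and by multiples of `f` and `g`.
-/

open Module Submodule
open scoped LinearAlgebra.Projectivization

section LinearAlgebra

variable {K : Type*} [Field K]

lemma span_setOf_surjective_eq_top [Infinite K] {U M N : Type*} [AddCommGroup U] [Module K U]
    [AddCommGroup M] [Module K M] [AddCommGroup N] [Module K N] [FiniteDimensional K N]
    (φ : U →ₗ[K] M →ₗ[K] N) {u₀ : U} (hu₀ : Function.Surjective (φ u₀)) :
    span K {u | Function.Surjective (φ u)} = ⊤ := by
  -- Surjectivity is an open condition: for a section `s` of `φ u₀`, the map `φ (u - t • u₀)` is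
  -- surjective unless `t` is an eigenvalue of `φ u ∘ₗ s`.
  obtain ⟨s, hs⟩ := (φ u₀).exists_rightInverse_of_surjective (LinearMap.range_eq_top.2 hu₀)
  refine eq_top_iff'.2 fun u => ?_
  obtain ⟨t, ht⟩ : ∃ t, ¬ End.HasEigenvalue (φ u ∘ₗ s) t :=
    (End.finite_hasEigenvalue (φ u ∘ₗ s)).exists_notMem
  have hker : LinearMap.ker (φ u ∘ₗ s - t • (1 : End K N)) = ⊥ := by
    rw [← End.eigenspace_def]
    exact not_not.1 ht
  have hsurj : Function.Surjective (φ (u - t • u₀)) := by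
    have hcomp : φ (u - t • u₀) ∘ₗ s = φ u ∘ₗ s - t • (1 : End K N) := by
      rw [map_sub, map_smul, LinearMap.sub_comp, LinearMap.smul_comp, hs]
      rfl
    refine Function.Surjective.of_comp (g := s) ?_
    rw [← LinearMap.coe_comp, hcomp]
    exact LinearMap.injective_iff_surjective.1 (LinearMap.ker_eq_bot.1 hker)
  rw [← sub_add_cancel u (t • u₀)]
  exact add_mem (subset_span hsurj) (smul_mem _ t (subset_span hu₀))

lemma exists_forall_apply_eq_smul_of_commute [IsAlgClosed K] {I M : Type*} [AddCommGroup M]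
    [Module K M] [FiniteDimensional K M] [Nontrivial M] (T : I → End K M)
    (hT : ∀ i j, Commute (T i) (T j)) :
    ∃ x : M, x ≠ 0 ∧ ∃ χ : I → K, ∀ i, T i x = χ i • x := by
  -- Each `T i` is scalar on a minimal nonzero invariant subspace `W`, since the eigenspaces of
  -- `T i` in `W` are again invariant.
  obtain ⟨W, ⟨hW, hWT⟩, hmin⟩ := WellFounded.has_min
    (wellFounded_lt (α := Submodule K M)) {W | W ≠ ⊥ ∧ ∀ i, ∀ x ∈ W, T i x ∈ W}
    ⟨⊤, top_ne_bot, fun _ _ _ => mem_top⟩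
  have := nontrivial_iff_ne_bot.2 hW
  have hscalar : ∀ i, ∃ μ : K, ∀ x ∈ W, T i x = μ • x := by
    intro i
    obtain ⟨μ, hμ⟩ := End.exists_eigenvalue ((T i).restrict (hWT i))
    obtain ⟨x, hx, hx0⟩ := hμ.exists_hasEigenvector
    have hxT : T i x = μ • (x : M) := congrArg Subtype.val (End.mem_eigenspace_iff.1 hx)
    have hE : W ⊓ (T i).eigenspace μ = W := by
      refine inf_le_left.eq_of_not_lt (hmin _ ⟨?_, ?_⟩)
      · exact (Submodule.ne_bot_iff _).2
          ⟨x, ⟨x.2, End.mem_eigenspace_iff.2 hxT⟩, by simpa using hx0⟩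
      · exact fun j y hy => ⟨hWT j y hy.1,
          End.mapsTo_genEigenspace_of_comm (hT i j) μ 1 hy.2⟩
    exact ⟨μ, fun y hy => End.mem_eigenspace_iff.1 (inf_eq_left.1 hE hy)⟩
  choose χ hχ using hscalar
  obtain ⟨x, hxW, hx0⟩ := (Submodule.ne_bot_iff W).1 hW
  exact ⟨x, hx0, χ, fun i => hχ i x hxW⟩

lemma exists_dual_comp_eq_smul_comp [IsAlgClosed K] {I M₀ M₁ M₂ : Type*}
    [AddCommGroup M₀] [Module K M₀] [AddCommGroup M₁] [Module K M₁]
    [AddCommGroup M₂] [Module K M₂] [FiniteDimensional K M₂] [Nontrivial M₂]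
    (f : I → M₀ →ₗ[K] M₁) (g : I → M₁ →ₗ[K] M₂) (hfg : ∀ i j, g i ∘ₗ f j = g j ∘ₗ f i)
    {k : I} (hf : Function.Surjective (f k)) (hg : Function.Bijective (g k)) :
    ∃ ψ : Dual K M₂, ψ ≠ 0 ∧ ∃ χ : I → K, ∀ i, ψ ∘ₗ g i = χ i • ψ ∘ₗ g k := by
  let e : M₁ ≃ₗ[K] M₂ := .ofBijective (g k) hg
  let T : I → End K M₂ := fun i => g i ∘ₗ e.symm
  have hTg : ∀ i, T i ∘ₗ g k = g i := fun i =>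
    LinearMap.ext fun x => congrArg (g i) (e.symm_apply_apply x)
  have hTT : ∀ i j y, T i (T j (g k (f k y))) = g i (f j y) := fun i j y => by
    have hj : T j (g k (f k y)) = g k (f j y) := by
      rw [← LinearMap.comp_apply, hTg, ← LinearMap.comp_apply, hfg, LinearMap.comp_apply]
    rw [hj, ← LinearMap.comp_apply, hTg]
  have hT : ∀ i j, Commute (T i) (T j) := fun i j => by
    refine LinearMap.ext fun x => ?_
    obtain ⟨y, rfl⟩ := (hg.2.comp hf) x
    simp only [Module.End.mul_apply, Function.comp_apply, hTT]
    exact LinearMap.congr_fun (hfg i j) y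
  obtain ⟨ψ, hψ, χ, hχ⟩ := exists_forall_apply_eq_smul_of_commute
    (fun i => (T i).dualMap) fun i j => LinearMap.ext fun ψ =>
      congrArg (ψ ∘ₗ ·) (hT j i)
  refine ⟨ψ, hψ, χ, fun i => ?_⟩
  rw [← hTg i, ← LinearMap.comp_assoc, ← LinearMap.smul_comp, ← hχ i]
  rfl

end LinearAlgebra

section PowFiltration

variable {K A : Type*} [Field K] [CommRing A] [Algebra K A]

lemma le_span_setOf_map_mul_le [Infinite K] {M : Type*} [AddCommGroup M] [Module K M]
    [FiniteDimensional K M] (π : A →ₗ[K] M) (V L : Submodule K A) {w : A} (hw : w ∈ V)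
    (hwL : (V * L).map π ≤ ((K ∙ w) * L).map π) :
    V ≤ span K {u | u ∈ V ∧ (V * L).map π ≤ ((K ∙ u) * L).map π} := by
  let φ : V →ₗ[K] L →ₗ[K] (V * L).map π := LinearMap.mk₂ K
    (fun u x => ⟨π (u * x), mem_map_of_mem (mul_mem_mul u.2 x.2)⟩)
    (fun _ _ _ => Subtype.ext <| by simp [add_mul])
    (fun _ _ _ => Subtype.ext <| by simp)
    (fun _ _ _ => Subtype.ext <| by simp [mul_add])
    (fun _ _ _ => Subtype.ext <| by simp)
  have hφ : ∀ u : V,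
      Function.Surjective (φ u) ↔ (V * L).map π ≤ ((K ∙ (u : A)) * L).map π := by
    refine fun u => ⟨?_, ?_⟩
    · rintro hu y hy
      obtain ⟨x, hx⟩ := hu ⟨y, hy⟩
      exact ⟨u * x, mul_mem_mul (mem_span_singleton_self _) x.2, congrArg Subtype.val hx⟩
    · rintro hu ⟨y, hy⟩
      obtain ⟨_, ha, rfl⟩ := hu hy
      obtain ⟨x, hx, rfl⟩ := mem_span_singleton_mul.1 ha
      exact ⟨⟨x, hx⟩, rfl⟩
  have hspan := congrArg (map V.subtype)
    (span_setOf_surjective_eq_top φ (u₀ := ⟨w, hw⟩) ((hφ _).2 hwL))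
  rw [map_span, map_subtype_top] at hspan
  refine hspan.ge.trans (span_mono ?_)
  rintro _ ⟨u, hu, rfl⟩
  exact ⟨u.2, (hφ u).1 hu⟩

lemma exists_map_mul_le_of_le_span {M : Type*} [AddCommGroup M] [Module K M]
    [FiniteDimensional K M] (π : A →ₗ[K] M) (V L : Submodule K A)
    (h : ∀ z ∈ V, ((K ∙ z) * L).map π < (V * L).map π →
      V ≤ span K {w | w ∈ V ∧ ((K ∙ z) * L).map π ≤ ((K ∙ w) * L).map π}) :
    ∃ z ∈ V, (V * L).map π ≤ ((K ∙ z) * L).map π := by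
  obtain ⟨_, ⟨z, hz, rfl⟩, hmax⟩ := WellFounded.has_min (wellFounded_gt (α := Submodule K M))
    ((fun z => ((K ∙ z) * L).map π) '' V) ⟨_, 0, zero_mem V, rfl⟩
  refine ⟨z, hz, by_contra fun hzV => ?_⟩
  have hle : ((K ∙ z) * L).map π ≤ (V * L).map π :=
    map_mono (mul_le_mul_left ((span_singleton_le_iff_mem z V).2 hz) L)
  refine hzV (map_le_iff_le_comap.2 (mul_le.2 fun v hv x hx => ?_))
  refine (span_le (p := (((K ∙ z) * L).map π).comap (π ∘ₗ LinearMap.mulRight K x))).2 ?_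
    (h z hz (hle.lt_of_not_ge hzV) hv)
  rintro w ⟨hw, hzw⟩
  have heq := hzw.eq_of_not_lt (hmax _ ⟨w, hw, rfl⟩)
  rw [SetLike.mem_coe, heq]
  exact mem_map_of_mem (mul_mem_mul (mem_span_singleton_self w) hx)

theorem exists_map_pow_mul_le [Infinite K] {M : Type*} [AddCommGroup M] [Module K M]
    [FiniteDimensional K M] (π : A →ₗ[K] M) (V N : Submodule K A) (j : ℕ)
    (h : finrank K ((V ^ (j + 1) * N).map π) ≤ j + 1) :
    ∃ z ∈ V, (V ^ (j + 1) * N).map π ≤ ((K ∙ z) * (V ^ j * N)).map π := by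
  induction j generalizing N with
  | zero =>
    rw [zero_add, pow_one] at h ⊢
    rw [pow_zero, one_mul]
    refine exists_map_mul_le_of_le_span π V N fun z _ hlt v hv => subset_span ⟨hv, ?_⟩
    have hbot : ((K ∙ z) * N).map π = ⊥ :=
      Submodule.finrank_eq_zero.1 (by have := finrank_lt_finrank_of_lt hlt; omega)
    exact hbot.le.trans bot_le
  | succ j ih =>
    -- If `z * V ^ (j + 1) * N` is too small, its image has dimension at most `j + 1`, so induction
    -- applies to `z * N` in place of `N`; the resulting `w` can be perturbed to span `V`.
    rw [pow_succ', mul_assoc] at h ⊢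
    refine exists_map_mul_le_of_le_span π V _ fun z hz hlt => ?_
    have hzN : (K ∙ z) * (V ^ (j + 1) * N) = V * (V ^ j * ((K ∙ z) * N)) := by
      rw [pow_succ']; ring
    rw [hzN] at hlt ⊢
    obtain ⟨w, hw, hwN⟩ := ih ((K ∙ z) * N) (by
      have := finrank_lt_finrank_of_lt hlt
      rw [pow_succ', mul_assoc]
      omega)
    rw [pow_succ', mul_assoc] at hwN
    refine (le_span_setOf_map_mul_le π V _ hw hwN).trans (span_mono ?_)
    rintro u ⟨hu, hu'⟩
    refine ⟨hu, hu'.trans (map_mono (mul_le_mul_right ?_ _))⟩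
    calc V ^ j * ((K ∙ z) * N) ≤ V ^ j * (V * N) :=
          mul_le_mul_right (mul_le_mul_left ((span_singleton_le_iff_mem z V).2 hz) _) _
      _ = V ^ (j + 1) * N := by rw [pow_succ, mul_assoc]

end PowFiltration

section HVector

variable {K A : Type*} [Field K] [CommRing A] [Algebra K A] (V : Submodule K A)

/-- The graded piece `V ^ (j + 1) / V ^ j` of degree `j + 1` of the filtration of `A` by the powers
of `V`, realised as a subspace of `A ⧸ V ^ j`. -/
def grSucc (j : ℕ) : Submodule K (A ⧸ V ^ j) := (V ^ (j + 1)).map (V ^ j).mkQ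

/-- The Hilbert function of the graded algebra associated with the filtration of `A` by the powers
of `V`. For the coordinate ring of a finite set of points, filtered by the degree of
representatives, this is the `h`-vector of the set. -/
def hVector : ℕ → ℕ
  | 0 => finrank K (1 : Submodule K A)
  | j + 1 => finrank K (grSucc V j)

/-- The multiplication `V ^ j → V ^ (j + 1) / V ^ j` by an element of `V`. -/
def mulToGr (j : ℕ) (a : V) : ↥(V ^ j) →ₗ[K] grSucc V j :=
  ((V ^ j).mkQ ∘ₗ LinearMap.mulLeft K (a : A)).restrict fun _ hx =>
    mem_map_of_mem (pow_succ' V j ▸ mul_mem_mul a.2 hx)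

/-- The multiplication `V ^ (j + 1) / V ^ j → V ^ (j + 2) / V ^ (j + 1)` by an element of `V`. -/
def mulGr (j : ℕ) (a : V) : grSucc V j →ₗ[K] grSucc V (j + 1) :=
  ((V ^ j).mapQ (V ^ (j + 1)) (LinearMap.mulLeft K (a : A)) fun _ hx =>
    pow_succ' V j ▸ mul_mem_mul a.2 hx).restrict <| by
      rintro _ ⟨x, hx, rfl⟩
      exact ⟨a * x, pow_succ' V (j + 1) ▸ mul_mem_mul a.2 hx, rfl⟩

variable {V}

lemma mulGr_comp_mulToGr_comm (j : ℕ) (a b : V) :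
    mulGr V j a ∘ₗ mulToGr V j b = mulGr V j b ∘ₗ mulToGr V j a :=
  LinearMap.ext fun x => Subtype.ext <|
    congrArg (V ^ (j + 1)).mkQ (mul_left_comm (a : A) b x)

lemma pow_succ_le_sup_span_mul_succ {z : A} {j : ℕ} (h : V ^ (j + 1) ≤ V ^ j ⊔ (K ∙ z) * V ^ j) :
    V ^ (j + 2) ≤ V ^ (j + 1) ⊔ (K ∙ z) * V ^ (j + 1) :=
  calc V ^ (j + 2) = V * V ^ (j + 1) := pow_succ' V (j + 1)
    _ ≤ V * (V ^ j ⊔ (K ∙ z) * V ^ j) := mul_le_mul_right h V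
    _ = V ^ (j + 1) ⊔ (K ∙ z) * V ^ (j + 1) := by
      rw [Submodule.mul_sup, mul_left_comm, ← pow_succ']

lemma mulToGr_surjective {z : V} {j : ℕ} (h : V ^ (j + 1) ≤ V ^ j ⊔ (K ∙ (z : A)) * V ^ j) :
    Function.Surjective (mulToGr V j z) := by
  rintro ⟨_, x, hx, rfl⟩
  obtain ⟨b, hb, _, hzc, rfl⟩ := mem_sup.1 (h hx)
  obtain ⟨c, hc, rfl⟩ := mem_span_singleton_mul.1 hzc
  refine ⟨⟨c, hc⟩, Subtype.ext ?_⟩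
  exact (Submodule.Quotient.eq' (V ^ j)).2 (by simpa [mulToGr] using hb)

lemma mulGr_surjective {z : V} {j : ℕ} (h : V ^ (j + 1) ≤ V ^ j ⊔ (K ∙ (z : A)) * V ^ j) :
    Function.Surjective (mulGr V j z) := by
  intro y
  obtain ⟨x, rfl⟩ := mulToGr_surjective (pow_succ_le_sup_span_mul_succ h) y
  exact ⟨⟨(V ^ j).mkQ x, mem_map_of_mem x.2⟩, rfl⟩

lemma pow_eq_top_of_pow_succ_eq (hV : 1 ≤ V) {j D : ℕ} (hD : V ^ D = ⊤)
    (h : V ^ (j + 1) = V ^ j) : V ^ j = ⊤ := by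
  have hstab : ∀ k, V ^ (j + k) = V ^ j := fun k => by
    induction k with
    | zero => rfl
    | succ k ih => rw [← add_assoc, pow_succ, ih, ← pow_succ, h]
  rw [eq_top_iff, ← hD, ← hstab D]
  exact pow_le_pow_right' hV (Nat.le_add_left D j)

variable [FiniteDimensional K A]

lemma exists_pow_succ_le_sup_span_mul [Infinite K] {j : ℕ} (h : hVector V (j + 1) ≤ j + 1) :
    ∃ z : V, V ^ (j + 1) ≤ V ^ j ⊔ (K ∙ (z : A)) * V ^ j := by
  obtain ⟨z, hz, hle⟩ := exists_map_pow_mul_le (V ^ j).mkQ V 1 j (by rwa [mul_one])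
  simp only [mul_one, map_le_iff_le_comap, comap_map_mkQ] at hle
  exact ⟨⟨z, hz⟩, hle⟩

lemma hVector_succ_le [Infinite K] {j : ℕ} (h : hVector V (j + 1) ≤ j + 1) :
    hVector V (j + 2) ≤ hVector V (j + 1) := by
  obtain ⟨z, hz⟩ := exists_pow_succ_le_sup_span_mul h
  exact LinearMap.finrank_le_finrank_of_surjective (mulGr_surjective hz)

lemma exists_dual_of_hVector_succ_eq [IsAlgClosed K] {j : ℕ} (hj : hVector V (j + 1) ≤ j + 1)
    (hpos : 0 < hVector V (j + 2)) (heq : hVector V (j + 2) = hVector V (j + 1)) :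
    ∃ (Ψ : Dual K A) (z : V) (χ : V → K),
      (∀ b ∈ V ^ (j + 1), Ψ b = 0) ∧ (∃ b ∈ V ^ (j + 2), Ψ b ≠ 0) ∧
        ∀ a : V, ∀ b ∈ V ^ (j + 1), Ψ (a * b) = χ a * Ψ (z * b) := by
  obtain ⟨z, hz⟩ := exists_pow_succ_le_sup_span_mul hj
  have : Nontrivial (grSucc V (j + 1)) := nontrivial_of_finrank_pos hpos
  have hbij : Function.Bijective (mulGr V j z) :=
    ⟨(LinearMap.injective_iff_surjective_of_finrank_eq_finrank heq.symm).2 (mulGr_surjective hz),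
      mulGr_surjective hz⟩
  obtain ⟨ψ, hψ, χ, hχ⟩ := exists_dual_comp_eq_smul_comp (mulToGr V j) (mulGr V j)
    (mulGr_comp_mulToGr_comm j) (mulToGr_surjective hz) hbij
  obtain ⟨ψ', hψ'⟩ := LinearMap.exists_extend ψ
  have hψ'_apply : ∀ b (hb : b ∈ V ^ (j + 2)),
      ψ' ((V ^ (j + 1)).mkQ b) = ψ ⟨_, mem_map_of_mem hb⟩ := fun b hb =>
    LinearMap.congr_fun hψ' ⟨_, mem_map_of_mem hb⟩
  refine ⟨ψ' ∘ₗ (V ^ (j + 1)).mkQ, z, χ, fun b hb => ?_, ?_, fun a b hb => ?_⟩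
  · rw [LinearMap.comp_apply, mkQ_apply, (Quotient.mk_eq_zero _).2 hb, map_zero]
  · obtain ⟨⟨_, b, hb, rfl⟩, hψb⟩ := DFunLike.ne_iff.1 hψ
    exact ⟨b, hb, (hψ'_apply b hb).trans_ne hψb⟩
  · have hmem : ∀ c : V, c * b ∈ V ^ (j + 2) := fun c =>
      pow_succ' V (j + 1) ▸ mul_mem_mul c.2 hb
    simp only [LinearMap.comp_apply]
    rw [hψ'_apply _ (hmem a), hψ'_apply _ (hmem z)]
    exact LinearMap.congr_fun (hχ a) ⟨_, mem_map_of_mem hb⟩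

lemma finrank_grSucc_add_finrank_pow (hV : 1 ≤ V) (j : ℕ) :
    finrank K (grSucc V j) + finrank K ↥(V ^ j) = finrank K ↥(V ^ (j + 1)) := by
  have hle : V ^ j ≤ V ^ (j + 1) := pow_le_pow_right' hV j.le_succ
  have hrank := LinearMap.finrank_range_add_finrank_ker ((V ^ j).mkQ ∘ₗ (V ^ (j + 1)).subtype)
  rw [LinearMap.range_comp, range_subtype, LinearMap.ker_comp, ker_mkQ,
    (comapSubtypeEquivOfLe hle).finrank_eq] at hrank
  exact hrank

lemma sum_range_hVector (hV : 1 ≤ V) (J : ℕ) :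
    ∑ j ∈ Finset.range (J + 1), hVector V j = finrank K ↥(V ^ J) := by
  induction J with
  | zero => rw [zero_add, Finset.sum_range_one, pow_zero, hVector]
  | succ J ih =>
    rw [Finset.sum_range_succ, ih, add_comm]
    exact finrank_grSucc_add_finrank_pow hV J

lemma hVector_pos (hV : 1 ≤ V) {D k j : ℕ} (hD : V ^ D = ⊤) (hk : V ^ k ≠ ⊤) (hj : j ≤ k + 1) :
    0 < hVector V j := by
  cases j with
  | zero =>
    have : Nontrivial A := not_subsingleton_iff_nontrivial.1 fun h => hk (Subsingleton.elim _ _)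
    have : Nontrivial (1 : Submodule K A) := (Submodule.nontrivial_iff_ne_bot).2 one_ne_zero
    exact finrank_pos
  | succ j =>
    refine Nat.pos_of_ne_zero fun hzero => hk (top_le_iff.1 ?_)
    have hfin := finrank_grSucc_add_finrank_pow hV j
    rw [show finrank K (grSucc V j) = 0 from hzero, zero_add] at hfin
    have hstab := eq_of_le_of_finrank_eq (pow_le_pow_right' hV j.le_succ) hfin
    rw [← pow_eq_top_of_pow_succ_eq hV hD hstab.symm]
    exact pow_le_pow_right' hV (Nat.le_of_succ_le_succ hj)

end HVector

lemma mul_le_sum_range_of_growth {h : ℕ → ℕ} {m r : ℕ} (hrm : r ≤ m)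
    (hpos : ∀ j < m + r - 1, 0 < h j)
    (hanti : ∀ j, h j ≤ j → h (j + 1) ≤ h j)
    (hstrict : ∀ j, m ≤ j + 1 → h j ≤ j → 0 < h (j + 1) → h (j + 1) ≠ h j) :
    r * m ≤ ∑ j ∈ Finset.range (m + m), h j := by
  have hdecr : ∀ j, m ≤ j + 1 → h j ≤ j → ∀ k, j + k < m + r - 1 → h (j + k) + k ≤ h j := by
    intro j hmj hj k hk
    induction k with
    | zero => exact le_rfl
    | succ k ih =>
      have ihk := ih (by omega)
      have hle := hanti (j + k) (by omega)
      have hne := hstrict (j + k) (by omega) (by omega) (hpos (j + k + 1) hk)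
      have : h (j + k + 1) + (k + 1) ≤ h j := by omega
      exact this
  have hlow : ∀ j < m, r ≤ h j ∨ j + 1 ≤ h j := by
    intro j hjm
    by_contra! hsmall
    have hflat : ∀ k, h (j + k) ≤ h j := fun k => by
      induction k with
      | zero => exact le_rfl
      | succ k ih => exact (hanti (j + k) (by omega)).trans ih
    have hmid := hflat (m - 1 - j)
    rw [show j + (m - 1 - j) = m - 1 by omega] at hmid
    have hend := hdecr (m - 1) (by omega) (by omega) (r - 1) (by omega)
    have := hpos (m - 1 + (r - 1)) (by omega)
    omega
  have hhigh : ∀ j, j + 1 < r → r ≤ h (m + j) + (j + 1) := by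
    intro j hjr
    by_contra! hsmall
    have hend := hdecr (m + j) (by omega) (by omega) (r - 2 - j) (by omega)
    have := hpos (m + j + (r - 2 - j)) (by omega)
    omega
  -- Pair `h j` with `h (m + j)`: beyond `m` the sequence drops by at least one at each step.
  calc r * m = ∑ _ ∈ Finset.range m, r := by simp [mul_comm]
    _ ≤ ∑ j ∈ Finset.range m, (h j + h (m + j)) := by
      refine Finset.sum_le_sum fun j hj => ?_
      have := hlow j (Finset.mem_range.1 hj)
      have := hhigh j
      omega
    _ = ∑ j ∈ Finset.range (m + m), h j := by
      rw [Finset.sum_add_distrib, Finset.sum_range_add]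

lemma eval_smul_of_isHomogeneous {σ R : Type*} [CommSemiring R] {F : MvPolynomial σ R} {k : ℕ}
    (hF : F.IsHomogeneous k) (t : R) (w : σ → R) : eval (t • w) F = t ^ k * eval w F := by
  rw [eval_eq, eval_eq, Finset.mul_sum]
  refine Finset.sum_congr rfl fun d hd => ?_
  have hdeg : ∑ i ∈ d.support, d i = k := by
    rw [← hF (mem_support_iff.1 hd), Finsupp.weight_apply, Finsupp.sum]
    simp
  simp only [Pi.smul_apply, smul_eq_mul, mul_pow, Finset.prod_mul_distrib,
    Finset.prod_pow_eq_pow_sum, hdeg, mul_left_comm]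

section FormValues

variable {σ K A : Type*} [Field K] [CommRing A] [Algebra K A] {x : σ → A}

lemma map_aeval_homogeneousSubmodule (x : σ → A) (j : ℕ) :
    (homogeneousSubmodule σ K j).map (aeval x).toLinearMap = span K (Set.range x) ^ j := by
  rw [← homogeneousSubmodule_one_pow, Submodule.map_pow, homogeneousSubmodule_one_eq_span_X,
    map_span, ← Set.range_comp]
  congr 3
  exact funext fun k => aeval_X x k

lemma aeval_mem_span_range_pow {F : MvPolynomial σ K} {j : ℕ} (hF : F.IsHomogeneous j) :
    aeval x F ∈ span K (Set.range x) ^ j :=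
  map_aeval_homogeneousSubmodule (K := K) x j ▸ mem_map_of_mem hF

lemma dual_aeval_mul {Ψ : Dual K A} {z : A} {q : σ → K} {d : ℕ}
    (hz : z ∈ span K (Set.range x))
    (hΨ : ∀ k, ∀ b ∈ span K (Set.range x) ^ d, Ψ (x k * b) = q k * Ψ (z * b))
    {F : MvPolynomial σ K} {i e : ℕ} (hF : F.IsHomogeneous i) (hie : i + e = d + 1) {b : A}
    (hb : b ∈ span K (Set.range x) ^ e) :
    Ψ (aeval x F * b) = eval q F * Ψ (z ^ i * b) := by
  have hlin : ∀ L ∈ homogeneousSubmodule σ K 1, ∀ b ∈ span K (Set.range x) ^ d,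
      Ψ (aeval x L * b) = eval q L * Ψ (z * b) := by
    intro L hL b hb
    rw [homogeneousSubmodule_one_eq_span_X] at hL
    induction hL using span_induction with
    | mem L hL => obtain ⟨k, rfl⟩ := hL; rw [aeval_X, eval_X, hΨ k b hb]
    | zero => simp
    | add L L' _ _ ih ih' => rw [map_add, map_add, add_mul, map_add, ih, ih', add_mul]
    | smul c L _ ih =>
      rw [map_smul, smul_mul_assoc, map_smul, ih, smul_eval, smul_eq_mul, mul_assoc]
  rw [← mem_homogeneousSubmodule, ← homogeneousSubmodule_one_pow] at hF
  induction hF using Submodule.pow_induction_on_left' generalizing e b with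
  | algebraMap c => simp [← Algebra.smul_def]
  | add F G i _ _ ihF ihG =>
    rw [map_add, map_add, add_mul, map_add, ihF hie hb, ihG hie hb, add_mul]
  | mem_mul L hL i F hF ih =>
    rw [homogeneousSubmodule_one_pow] at hF
    have hmem : aeval x F * b ∈ span K (Set.range x) ^ d := by
      rw [show d = i + e by omega, pow_add]
      exact mul_mem_mul (aeval_mem_span_range_pow hF) hb
    calc
      Ψ (aeval x (L * F) * b) = Ψ (aeval x L * (aeval x F * b)) := by
        rw [map_mul (aeval x), mul_assoc]
      _ = eval q L * Ψ (aeval x F * (z * b)) := by rw [hlin L hL _ hmem, mul_left_comm]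
      _ = eval q L * (eval q F * Ψ (z ^ i * (z * b))) := by
        rw [ih (e := e + 1) (by omega) (pow_succ' (span K (Set.range x)) e ▸ mul_mem_mul hz hb)]
      _ = eval q (L * F) * Ψ (z ^ (i + 1) * b) := by
        rw [map_mul (eval q), pow_succ, mul_assoc, mul_assoc]

variable [FiniteDimensional K A] [IsAlgClosed K]

lemma exists_eval_eq_zero_of_hVector_succ_eq {j : ℕ}
    (hj : hVector (span K (Set.range x)) (j + 1) ≤ j + 1)
    (hpos : 0 < hVector (span K (Set.range x)) (j + 2))
    (heq : hVector (span K (Set.range x)) (j + 2) = hVector (span K (Set.range x)) (j + 1)) :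
    ∃ q : σ → K, q ≠ 0 ∧ ∀ F : MvPolynomial σ K, F.IsHomogeneous (j + 2) →
      aeval x F ∈ span K (Set.range x) ^ (j + 1) → eval q F = 0 := by
  obtain ⟨Ψ, z, χ, hΨ, ⟨b, hb, hΨb⟩, hχ⟩ := exists_dual_of_hVector_succ_eq hj hpos heq
  let q : σ → K := fun k => χ ⟨x k, subset_span ⟨k, rfl⟩⟩
  have hΨF : ∀ F : MvPolynomial σ K, F.IsHomogeneous (j + 2) →
      Ψ (aeval x F) = eval q F * Ψ (z ^ (j + 2)) := fun F hF => by
    simpa using dual_aeval_mul (e := 0) z.2 (fun k => hχ ⟨x k, subset_span ⟨k, rfl⟩⟩) hF rfl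
      (b := 1) (Submodule.one_le.1 (pow_zero _).ge)
  rw [← map_aeval_homogeneousSubmodule] at hb
  obtain ⟨G, hG, rfl⟩ := hb
  have hGz : eval q G * Ψ (z ^ (j + 2)) ≠ 0 := hΨF G hG ▸ hΨb
  refine ⟨q, fun hq => left_ne_zero_of_mul hGz ?_, fun F hF hFmem => ?_⟩
  · simpa [hq] using eval_smul_of_isHomogeneous hG 0 q
  · exact (mul_eq_zero.1 ((hΨF F hF).symm.trans (hΨ _ hFmem))).resolve_right
      (right_ne_zero_of_mul hGz)

lemma hVector_succ_ne {m j : ℕ} (hm : 0 < m)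
    (hcut : ∀ q : σ → K, q ≠ 0 → ∃ F : MvPolynomial σ K, F.IsHomogeneous m ∧
      aeval x F ∈ span K (Set.range x) ^ (m - 1) ∧ eval q F ≠ 0)
    (hmj : m ≤ j + 2) (hj : hVector (span K (Set.range x)) (j + 1) ≤ j + 1)
    (hpos : 0 < hVector (span K (Set.range x)) (j + 2)) :
    hVector (span K (Set.range x)) (j + 2) ≠ hVector (span K (Set.range x)) (j + 1) := by
  intro heq
  obtain ⟨q, hq, hq0⟩ := exists_eval_eq_zero_of_hVector_succ_eq hj hpos heq
  obtain ⟨F, hF, hFx, hFq⟩ := hcut q hq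
  obtain ⟨k, hk⟩ := Function.ne_iff.1 hq
  have hhom : (X k ^ (j + 2 - m) * F).IsHomogeneous (j + 2) := by
    simpa [Nat.sub_add_cancel hmj] using (isHomogeneous_X_pow k (j + 2 - m)).mul hF
  have hmem : aeval x (X k ^ (j + 2 - m) * F) ∈ span K (Set.range x) ^ (j + 1) := by
    rw [map_mul, show j + 1 = j + 2 - m + (m - 1) by omega, pow_add]
    exact mul_mem_mul (aeval_mem_span_range_pow (isHomogeneous_X_pow k _)) hFx
  refine mul_ne_zero (pow_ne_zero (j + 2 - m) hk) hFq ?_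
  simpa using hq0 _ hhom hmem

theorem span_range_pow_eq_top_of_finrank_lt {m r D : ℕ} (hx : 1 ≤ span K (Set.range x))
    (hD : span K (Set.range x) ^ D = ⊤)
    (hcut : ∀ q : σ → K, q ≠ 0 → ∃ F : MvPolynomial σ K, F.IsHomogeneous m ∧
      aeval x F ∈ span K (Set.range x) ^ (m - 1) ∧ eval q F ≠ 0)
    (hrm : r ≤ m) (hlt : finrank K A < r * m) :
    span K (Set.range x) ^ (m + r - 3) = ⊤ := by
  by_contra htop
  have hr : 0 < r := pos_of_mul_pos_left hlt.pos m.zero_le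
  have hm : 0 < m := hr.trans_le hrm
  have hpos : ∀ j < m + r - 1, 0 < hVector (span K (Set.range x)) j := fun j hj =>
    hVector_pos hx hD htop (by omega)
  refine hlt.not_ge ((mul_le_sum_range_of_growth hrm hpos ?_ ?_).trans ?_)
  · rintro (_ | j) hj
    · exact absurd (hpos 0 (by omega)) hj.not_gt
    · exact hVector_succ_le hj
  · rintro (_ | j) hmj hj hj'
    · exact absurd (hpos 0 (by omega)) hj.not_gt
    · exact hVector_succ_ne hm hcut hmj hj hj'
  · rw [show m + m = m + m - 1 + 1 by omega, sum_range_hVector hx]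
    exact finrank_le _

end FormValues

section Interpolation

variable {σ K ι : Type*} [Field K]

lemma prod_mem_pow_card {A : Type*} [CommRing A] [Algebra K A] {V : Submodule K A} {t : Finset ι}
    {s : ι → A} (hs : ∀ j ∈ t, s j ∈ V) : ∏ j ∈ t, s j ∈ V ^ t.card := by
  induction t using Finset.cons_induction with
  | empty => exact Submodule.one_le.1 (pow_zero V).ge
  | cons j t hj ih =>
    rw [Finset.prod_cons, Finset.card_cons, pow_succ']
    exact mul_mem_mul (hs j (Finset.mem_cons_self j t))
      (ih fun k hk => hs k (Finset.mem_cons_of_mem hk))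

lemma aeval_pi_apply (x : σ → ι → K) (F : MvPolynomial σ K) (i : ι) :
    aeval x F i = eval (fun k => x k i) F := by
  change Pi.evalAlgHom K (fun _ : ι => K) i (aeval x F) = _
  rw [← AlgHom.comp_apply, comp_aeval, ← coe_aeval_eq_eval]
  rfl

variable [Finite ι]

lemma pow_card_sub_one_eq_top_of_separating {V : Submodule K (ι → K)}
    (hV : ∀ i j, i ≠ j → ∃ s ∈ V, s i = 1 ∧ s j = 0) : V ^ (Nat.card ι - 1) = ⊤ := by
  classical
  have := Fintype.ofFinite ι
  rw [eq_top_iff, ← (Pi.basisFun K ι).span_eq, span_le]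
  rintro _ ⟨i, rfl⟩
  choose! s hsV hsi hsj using hV i
  have hprod : ∏ j ∈ Finset.univ.erase i, s j ∈ V ^ (Nat.card ι - 1) := by
    rw [Nat.card_eq_fintype_card, ← Finset.card_univ,
      ← Finset.card_erase_of_mem (Finset.mem_univ i)]
    exact prod_mem_pow_card fun j hj => hsV j (Finset.ne_of_mem_erase hj).symm
  have hsingle : Pi.basisFun K ι i = ∏ j ∈ Finset.univ.erase i, s j := by
    ext j
    rw [Pi.basisFun_apply, Finset.prod_apply]
    rcases eq_or_ne j i with rfl | hj
    · rw [Pi.single_eq_same,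
        Finset.prod_eq_one fun k hk => hsi k (Finset.ne_of_mem_erase hk).symm]
    · rw [Pi.single_eq_of_ne hj]
      exact (Finset.prod_eq_zero (f := fun k => s k j)
        (Finset.mem_erase.2 ⟨hj, Finset.mem_univ j⟩) (hsj j hj.symm)).symm
  exact hsingle ▸ hprod

theorem exists_isHomogeneous_forall_eval_eq [IsAlgClosed K] {v : ι → σ → K} {L : MvPolynomial σ K}
    {m r : ℕ} (hv : Function.Injective v) (hL : L.IsHomogeneous 1) (hvL : ∀ i, eval (v i) L = 1)
    (hcut : ∀ q : σ → K, q ≠ 0 → eval q L = 0 →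
      ∃ F : MvPolynomial σ K, F.IsHomogeneous m ∧ (∀ i, eval (v i) F = 0) ∧ eval q F ≠ 0)
    (hrm : r ≤ m) (hlt : Nat.card ι < r * m) (c : ι → K) :
    ∃ F : MvPolynomial σ K, F.IsHomogeneous (m + r - 3) ∧ ∀ i, eval (v i) F = c i := by
  have := Fintype.ofFinite ι
  let x : σ → ι → K := fun k i => v i k
  have hxF : ∀ F i, aeval x F i = eval (v i) F := aeval_pi_apply x
  have hxL : aeval x L = 1 := funext fun i => by rw [hxF, hvL, Pi.one_apply]
  have hLmem : 1 ∈ span K (Set.range x) := by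
    simpa [hxL] using aeval_mem_span_range_pow (x := x) hL
  have hV : 1 ≤ span K (Set.range x) := Submodule.one_le.2 hLmem
  have hsep : ∀ i j, i ≠ j → ∃ s ∈ span K (Set.range x), s i = 1 ∧ s j = 0 := fun i j hij => by
    obtain ⟨k, hk⟩ := Function.ne_iff.1 (hv.ne hij)
    refine ⟨(v i k - v j k)⁻¹ • (x k - v j k • 1),
      smul_mem _ _ (sub_mem (subset_span ⟨k, rfl⟩) (smul_mem _ _ hLmem)), ?_, ?_⟩
    · simp [x, sub_ne_zero.2 hk]
    · simp [x]
  have htop := span_range_pow_eq_top_of_finrank_lt hV (pow_card_sub_one_eq_top_of_separating hsep)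
    (m := m) (fun q hq => ?_) hrm (by simpa using hlt)
  · rw [← map_aeval_homogeneousSubmodule, eq_top_iff'] at htop
    obtain ⟨F, hF, hFc⟩ := htop c
    exact ⟨F, hF, fun i => (hxF F i).symm.trans (congrFun hFc i)⟩
  · by_cases hq0 : eval q L = 0
    · obtain ⟨F, hF, hFv, hFq⟩ := hcut q hq hq0
      refine ⟨F, hF, ?_, hFq⟩
      have hFx : aeval x F = 0 := funext fun i => by rw [hxF, hFv, Pi.zero_apply]
      exact hFx ▸ zero_mem _
    · refine ⟨L ^ m, by simpa using hL.pow m, ?_, by simpa using pow_ne_zero m hq0⟩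
      rw [map_pow, hxL, one_pow]
      exact Submodule.one_le.1 (one_le_pow_of_one_le' hV _)

end Interpolation

section Projective

variable {σ K : Type*} [Field K]

/-- A set `Γ` of points of projective space imposes independent conditions on forms of degree `d`:
each point of `Γ` is separated from the others by a form of degree `d`. -/
def ImposesIndependentConditions (Γ : Set (ℙ K (σ → K))) (d : ℕ) : Prop :=
  ∀ P ∈ Γ, ∃ F : MvPolynomial σ K,
    F.IsHomogeneous d ∧ (∀ Q ∈ Γ, Q ≠ P → eval Q.rep F = 0) ∧ eval P.rep F ≠ 0

/-- `Γ` is set-theoretically an intersection of hypersurfaces of degree `m`. -/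
def IsCutOutInDegree (Γ : Set (ℙ K (σ → K))) (m : ℕ) : Prop :=
  ∀ P ∉ Γ, ∃ F : MvPolynomial σ K,
    F.IsHomogeneous m ∧ (∀ Q ∈ Γ, eval Q.rep F = 0) ∧ eval P.rep F ≠ 0

lemma exists_linear_form_forall_eval_rep_ne_zero [Infinite K] {Γ : Set (ℙ K (σ → K))}
    (hΓ : Γ.Finite) :
    ∃ L : MvPolynomial σ K, L.IsHomogeneous 1 ∧ ∀ P ∈ Γ, eval P.rep L ≠ 0 := by
  have := hΓ.to_subtype
  obtain ⟨L, hL, hLΓ⟩ := Dual.exists_forall_mem_ne_zero_of_forall_exists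
    (homogeneousSubmodule σ K 1) (fun P : Γ => (aeval P.1.rep).toLinearMap) fun P => by
      obtain ⟨k, hk⟩ := Function.ne_iff.1 P.1.rep_nonzero
      exact ⟨X k, isHomogeneous_X K k, by simpa using hk⟩
  exact ⟨L, hL, fun P hP => hLΓ ⟨P, hP⟩⟩

theorem IsCutOutInDegree.imposesIndependentConditions [IsAlgClosed K] {Γ : Set (ℙ K (σ → K))}
    {m r : ℕ} (hcut : IsCutOutInDegree Γ m) (hΓ : Γ.Finite) (hrm : r ≤ m)
    (hlt : Γ.ncard < r * m) : ImposesIndependentConditions Γ (m + r - 3) := by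
  classical
  intro P hP
  have := hΓ.to_subtype
  obtain ⟨L, hL, hLΓ⟩ := exists_linear_form_forall_eval_rep_ne_zero hΓ
  let c : Γ → K := fun Q => (eval Q.1.rep L)⁻¹
  have hc : ∀ Q : Γ, c Q ≠ 0 := fun Q => inv_ne_zero (hLΓ Q Q.2)
  have heval : ∀ {d : ℕ} {F : MvPolynomial σ K}, F.IsHomogeneous d → ∀ Q : Γ,
      (eval (c Q • Q.1.rep) F = 0 ↔ eval Q.1.rep F = 0) := fun hF Q => by
    rw [eval_smul_of_isHomogeneous hF, mul_eq_zero_iff_left (pow_ne_zero _ (hc Q))]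
  have hinj : Function.Injective fun Q : Γ => c Q • Q.1.rep := fun Q R hQR => by
    replace hQR : c Q • Q.1.rep = c R • R.1.rep := hQR
    rw [Subtype.ext_iff, ← Q.1.mk_rep, ← R.1.mk_rep, Projectivization.mk_eq_mk_iff']
    exact ⟨(c Q)⁻¹ * c R, by rw [mul_smul, ← hQR, inv_smul_smul₀ (hc Q)]⟩
  have hcutL : ∀ q : σ → K, q ≠ 0 → eval q L = 0 → ∃ F : MvPolynomial σ K, F.IsHomogeneous m ∧
      (∀ Q : Γ, eval (c Q • Q.1.rep) F = 0) ∧ eval q F ≠ 0 := fun q hq hqL => by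
    obtain ⟨t, ht⟩ := Projectivization.exists_smul_eq_mk_rep K q hq
    obtain ⟨F, hF, hFΓ, hFq⟩ := hcut (.mk K q hq) fun hqΓ => hLΓ _ hqΓ <| by
      rw [← ht, Units.smul_def, eval_smul_of_isHomogeneous hL, hqL, mul_zero]
    rw [← ht, Units.smul_def, eval_smul_of_isHomogeneous hF] at hFq
    exact ⟨F, hF, fun Q => (heval hF Q).2 (hFΓ Q Q.2), right_ne_zero_of_mul hFq⟩
  have hcL : ∀ Q : Γ, eval (c Q • Q.1.rep) L = 1 := fun Q => by
    rw [eval_smul_of_isHomogeneous hL, pow_one, inv_mul_cancel₀ (hLΓ Q Q.2)]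
  obtain ⟨F, hF, hFP⟩ :=
    exists_isHomogeneous_forall_eval_eq hinj hL hcL hcutL hrm hlt (Pi.single ⟨P, hP⟩ 1)
  refine ⟨F, hF, fun Q hQ hQP => (heval hF ⟨Q, hQ⟩).1 ?_, (heval hF ⟨P, hP⟩).not.1 ?_⟩
  · rw [hFP, Pi.single_eq_of_ne (Subtype.coe_ne_coe.1 hQP)]
  · rw [hFP, Pi.single_eq_same]
    exact one_ne_zero

end Projective

section SingularLocus

variable {σ K : Type*} [Field K]

lemma linearIndependent_pair_iff_exists_minor_ne_zero {u v : σ → K} :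
    LinearIndependent K ![u, v] ↔ ∃ a b, u a * v b - u b * v a ≠ 0 := by
  refine ⟨fun h => ?_, fun ⟨a, b, hab⟩ => LinearIndependent.pair_iff.2 fun s t hst => ?_⟩
  · by_contra! hminors
    have hu : u = 0 := funext fun b => (h.eq_zero_of_pair' (s := v b) (t := u b) <|
      funext fun a => by
        simpa only [Pi.smul_apply, smul_eq_mul, mul_comm] using sub_eq_zero.1 (hminors a b)).2
    exact h.ne_zero 0 hu
  · have ha : s * u a + t * v a = 0 := congrFun hst a
    have hb : s * u b + t * v b = 0 := congrFun hst b
    constructor <;> refine (mul_eq_zero.1 ?_).resolve_right hab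
    · linear_combination v b * ha - v a * hb
    · linear_combination u a * hb - u b * ha

variable [Fintype σ]

lemma rank_of_pair_le_one_iff (u v : σ → K) :
    (Matrix.of ![u, v]).rank ≤ 1 ↔ ∀ a b, u a * v b - u b * v a = 0 := by
  have hind := linearIndependent_iff_card_le_finrank_span (R := K) (b := ![u, v])
  rw [linearIndependent_pair_iff_exists_minor_ne_zero, Fintype.card_fin] at hind
  have hrank : (Matrix.of ![u, v]).rank = Set.finrank K (Set.range ![u, v]) :=
    Matrix.rank_eq_finrank_span_row _
  rw [hrank, ← not_iff_not, not_le, Nat.lt_iff_add_one_le, ← hind]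
  push Not
  rfl

/-- The locus in projective space where two forms `f` and `g` vanish and their Jacobian matrix has
rank at most one: the singular points of the scheme `{f = g = 0}`, if it has codimension two. -/
def singularLocus (f g : MvPolynomial σ K) : Set (ℙ K (σ → K)) :=
  {P | eval P.rep f = 0 ∧ eval P.rep g = 0 ∧
    (Matrix.of ![fun j => eval P.rep (pderiv j f), fun j => eval P.rep (pderiv j g)]).rank ≤ 1}

lemma mem_singularLocus_iff {f g : MvPolynomial σ K} {P : ℙ K (σ → K)} :
    P ∈ singularLocus f g ↔ eval P.rep f = 0 ∧ eval P.rep g = 0 ∧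
      ∀ a b, eval P.rep (pderiv a f * pderiv b g - pderiv b f * pderiv a g) = 0 := by
  simp only [singularLocus, Set.mem_ofPred_eq, rank_of_pair_le_one_iff, map_sub, map_mul]

lemma isCutOutInDegree_singularLocus {f g : MvPolynomial σ K} {n d : ℕ}
    (hf : f.IsHomogeneous n) (hg : g.IsHomogeneous d) (hn : 2 ≤ n) (hd : 2 ≤ d) :
    IsCutOutInDegree (singularLocus f g) (n + d - 2) := by
  intro P hP
  obtain ⟨k, hk⟩ : ∃ k, P.rep k ≠ 0 := Function.ne_iff.1 P.rep_nonzero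
  by_cases hfP : eval P.rep f = 0
  · by_cases hgP : eval P.rep g = 0
    · obtain ⟨a, b, hab⟩ : ∃ a b,
          eval P.rep (pderiv a f * pderiv b g - pderiv b f * pderiv a g) ≠ 0 := by
        by_contra! h
        exact hP (mem_singularLocus_iff.2 ⟨hfP, hgP, h⟩)
      refine ⟨_, ?_, fun Q hQ => (mem_singularLocus_iff.1 hQ).2.2 a b, hab⟩
      rw [show n + d - 2 = n - 1 + (d - 1) by omega]
      exact (hf.pderiv.mul hg.pderiv).sub (hf.pderiv.mul hg.pderiv)
    · refine ⟨X k ^ (n - 2) * g, ?_, fun Q hQ => by rw [map_mul, hQ.2.1, mul_zero], ?_⟩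
      · rw [show n + d - 2 = n - 2 + d by omega]
        exact (isHomogeneous_X_pow k _).mul hg
      · simpa [hgP] using fun h => absurd h hk
  · refine ⟨X k ^ (d - 2) * f, ?_, fun Q hQ => by rw [map_mul, hQ.1, mul_zero], ?_⟩
    · rw [show n + d - 2 = d - 2 + n by omega]
      exact (isHomogeneous_X_pow k _).mul hf
    · simpa [hfP] using fun h => absurd h hk

end SingularLocus

theorem stmt_7_general {σ K : Type*} [Fintype σ] [Field K] [IsAlgClosed K] {n d r : ℕ}
    {f g : MvPolynomial σ K} (hf : f.IsHomogeneous n) (hg : g.IsHomogeneous d) (hn : 2 ≤ n)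
    (hd : 2 ≤ d) (hfin : (singularLocus f g).Finite) (hr : r ≤ n + d - 2)
    (hcard : (singularLocus f g).ncard < r * (n + d - 2)) :
    ImposesIndependentConditions (singularLocus f g) (n + d + r - 5) := by
  rw [show n + d + r - 5 = n + d - 2 + r - 3 by omega]
  exact (isCutOutInDegree_singularLocus hf hg hn hd).imposesIndependentConditions hfin hr hcard

theorem stmt_7 (n r : ℕ) (f g : MvPolynomial (Fin 5) ℂ)
    (hf : f.IsHomogeneous n) (hg : g.IsHomogeneous (2 * r))
    (hn : 2 ≤ n) (hr : 3 ≤ r) (hrn : n ≤ 2 * r)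
    (hFsmooth : ∀ p : ProjPt 4, eval p.rep f = 0 → ∃ j : Fin 5, eval p.rep (pderiv j f) ≠ 0)
    (hfin : (SingCI5 f g).Finite)
    (hcard : 4 * (SingCI5 f g).ncard ≤ (2 * r + n - 2) * r) :
    ∀ P ∈ SingCI5 f g, ∃ F : MvPolynomial (Fin 5) ℂ,
      F.IsHomogeneous (3 * r + n - 5) ∧
      (∀ Q ∈ SingCI5 f g, Q ≠ P → VanishesAt F Q) ∧ ¬ VanishesAt F P := by
  rw [show 3 * r + n - 5 = n + 2 * r + r - 5 by omega]
  refine stmt_7_general hf hg hn (by omega) hfin (by omega) ?_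
  have hpos : 0 < (2 * r + n - 2) * r := Nat.mul_pos (by omega) (by omega)
  calc (SingCI5 f g).ncard < (2 * r + n - 2) * r := by omega
    _ = r * (n + 2 * r - 2) := by rw [mul_comm, add_comm n]
end
end

section
/- Let f, g ∈ ℂ[x_0,…,x_5] be homogeneous of degrees n and k respectively with n ≥ k ≥ 1, let X = {f = g = 0} ⊂ ℙ⁵(ℂ), and suppose that Sing(X) is finite. Then there exist λ ∈ ℂ \ {0} and a homogeneous polynomial h ∈ ℂ[x_0,…,x_5] of degree n−k such that, setting f̂ = λf + hg, one has {f̂ = g = 0} = X and every point P ∈ ℙ⁵(ℂ) at which f̂ and all partial derivatives ∂f̂/∂x_j vanish belongs to Sing(X). -/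
open MvPolynomial

noncomputable section

/-- The `2 × 6` Jacobian matrix of `f, g` evaluated at `v`. -/
def Jac6 (f g : MvPolynomial (Fin 6) ℂ) (v : Fin 6 → ℂ) : Matrix (Fin 2) (Fin 6) ℂ :=
  Matrix.of ![fun j : Fin 6 => eval v (pderiv j f), fun j : Fin 6 => eval v (pderiv j g)]

/-- The singular locus of `X = {f = g = 0} ⊂ ℙ⁵(ℂ)`: points of `X` where the Jacobian
matrix has rank at most `1`. -/
def SingCI6 (f g : MvPolynomial (Fin 6) ℂ) : Set (ProjPt 5) :=
  {p : ProjPt 5 | eval p.rep f = 0 ∧ eval p.rep g = 0 ∧ (Jac6 f g p.rep).rank ≤ 1}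

/-!
A suitable member of the linear system `f + (∑ cᵢ xᵢᵈ) g` with `d = n - k` works: by Bertini's
theorem its singular points lie on the base locus `{xᵢᵈ g = 0 for all i}`, i.e. on `g = 0`, and
there `∇f = -h ∇g` for `h = ∑ cᵢ xᵢᵈ`.

For Bertini's theorem for `F + ∑ tᵢ Gᵢ`, take the generic point of a component of the incidence
variety `{(t, y) : F + ∑ tᵢ Gᵢ is singular at y}`. In the differential of `F(y) + ∑ tᵢ Gᵢ(y) = 0`
the coefficients of the `dyⱼ` vanish, which leaves `∑ Gᵢ(y) dtᵢ = 0`. Differentials of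
algebraically independent elements are linearly independent in characteristic zero, so either all
`Gᵢ(y)` vanish or the `tᵢ` satisfy an algebraic relation. The product of these relations over the
finitely many components is a nonzero polynomial in `t`, and any `t` off its zero locus will do.
-/

section Differentials

open KaehlerDifferential

lemma D_aeval_eq_sum {R σ B : Type*} [CommRing R] [Fintype σ] [CommRing B] [Algebra R B]
    (y : σ → B) (p : MvPolynomial σ R) :
    D R B (aeval y p) = ∑ j, aeval y (pderiv j p) • D R B (y j) := by
  let : Algebra (MvPolynomial σ R) B := (aeval y).toAlgebra
  have : IsScalarTower R (MvPolynomial σ R) B := .of_algHom (aeval y)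
  have algebraMap_eq (q : MvPolynomial σ R) : algebraMap (MvPolynomial σ R) B q = aeval y q := rfl
  have smul_eq (q : MvPolynomial σ R) (ω : Ω[B⁄R]) : q • ω = aeval y q • ω :=
    (algebraMap_smul B q ω).symm
  have h := congrArg (KaehlerDifferential.map R R (MvPolynomial σ R) B)
    ((mvPolynomialBasis R σ).sum_repr (D R _ p))
  simpa only [mvPolynomialBasis_repr_apply, mvPolynomialBasis_apply, map_sum, map_smul, map_D,
    algebraMap_eq, smul_eq, aeval_X] using h.symm

lemma mapBaseChange_injective_of_subsingleton_h1Cotangent (R S T : Type*) [CommRing R] [CommRing S]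
    [CommRing T] [Algebra R S] [Algebra R T] [Algebra S T] [IsScalarTower R S T]
    [Subsingleton (Algebra.H1Cotangent S T)] : Function.Injective (mapBaseChange R S T) := by
  rw [injective_iff_map_eq_zero]
  intro x hx
  obtain ⟨z, rfl⟩ := (Algebra.H1Cotangent.exact_δ_mapBaseChange R S T x).mp hx
  rw [Subsingleton.elim z 0, map_zero]

lemma formallySmooth_of_field_of_charZero (E L : Type*) [Field E] [CharZero E] [Field L]
    [Algebra E L] : Algebra.FormallySmooth E L := by
  obtain ⟨s, hs⟩ := exists_isTranscendenceBasis E L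
  have := hs.isAlgebraic_field
  exact .of_algebraicIndependent_of_isSeparable hs.1

lemma formallySmooth_of_isDomain_of_charZero (A L : Type*) [CommRing A] [IsDomain A] [CharZero A]
    [Field L] [Algebra A L] [FaithfulSMul A L] : Algebra.FormallySmooth A L := by
  let E := FractionRing A
  let : Algebra E L := FractionRing.liftAlgebra A L
  have : IsScalarTower A E L := FractionRing.isScalarTower_liftAlgebra A L
  have : CharZero E := charZero_of_injective_algebraMap (IsFractionRing.injective A E)
  have : Algebra.FormallySmooth E L := formallySmooth_of_field_of_charZero E L
  have : Algebra.FormallySmooth A E := .of_isLocalization (nonZeroDivisors A)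
  exact .comp A E L

lemma linearIndependent_D_of_algebraicIndependent {ι K L : Type*} [CommRing K] [IsDomain K]
    [CharZero K] [Field L] [Algebra K L] {t : ι → L} (ht : AlgebraicIndependent K t) :
    LinearIndependent L fun i => D K L (t i) := by
  let A := MvPolynomial ι K
  let : Algebra A L := (aeval t).toAlgebra
  have : IsScalarTower K A L := .of_algHom (aeval t)
  have : FaithfulSMul A L := (faithfulSMul_iff_algebraMap_injective A L).mpr ht
  have : Algebra.FormallySmooth A L := formallySmooth_of_isDomain_of_charZero A L
  have algebraMap_X (i : ι) : algebraMap A L (X i) = t i := aeval_X t i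
  have map_basis (i : ι) :
      mapBaseChange K A L ((mvPolynomialBasis K ι).baseChange L i) = D K L (t i) := by
    rw [Module.Basis.baseChange_apply, mvPolynomialBasis_apply, mapBaseChange_tmul, map_D,
      one_smul, algebraMap_X]
  have h := ((mvPolynomialBasis K ι).baseChange L).linearIndependent.map' (mapBaseChange K A L)
    (LinearMap.ker_eq_bot.mpr (mapBaseChange_injective_of_subsingleton_h1Cotangent K A L))
  exact (funext map_basis : _ = fun i => D K L (t i)) ▸ h

end Differentials

section LinearSystem

variable {σ ι K : Type*} [Fintype ι]

section IncidenceIdeal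

variable [CommRing K] {B : Type*} [CommRing B] [Algebra K B]

/-- The value at the point `y` of the member `F + ∑ i, t i * G i` of a linear system. Both the
parameters `t` and the point `y` may have coordinates in an algebra `B` over the base ring, so that
generic members and generic points are covered. -/
def linearSystemEval (F : MvPolynomial σ K) (G : ι → MvPolynomial σ K) (t : ι → B) (y : σ → B) :
    B :=
  aeval y F + ∑ i, t i * aeval y (G i)

/-- The member `F + ∑ i, t i * G i` of a linear system vanishes at `y` together with all its partial
derivatives. -/
def IsSingularMember (F : MvPolynomial σ K) (G : ι → MvPolynomial σ K) (t : ι → B) (y : σ → B) :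
    Prop :=
  linearSystemEval F G t y = 0 ∧
    ∀ j, linearSystemEval (pderiv j F) (fun i => pderiv j (G i)) t y = 0

/-- The ideal of the incidence variety of pairs (parameter `t`, singular point `y` of
`F + ∑ i, t i * G i`). The variables indexed by `ι` are the parameters, those indexed by `σ` the
coordinates of the point. -/
def incidenceIdeal (F : MvPolynomial σ K) (G : ι → MvPolynomial σ K) :
    Ideal (MvPolynomial (ι ⊕ σ) K) :=
  Ideal.span (insert (linearSystemEval F G (X ∘ Sum.inl) (X ∘ Sum.inr))
    (Set.range fun j =>
      linearSystemEval (pderiv j F) (fun i => pderiv j (G i)) (X ∘ Sum.inl) (X ∘ Sum.inr)))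

lemma linearSystemEval_eq_eval (F : MvPolynomial σ K) (G : ι → MvPolynomial σ K) (c : ι → K)
    (v : σ → K) : linearSystemEval F G c v = eval v (F + ∑ i, C (c i) * G i) := by
  simp [linearSystemEval, aeval_eq_eval]

lemma isSingularMember_iff_eval {F : MvPolynomial σ K} {G : ι → MvPolynomial σ K} {c : ι → K}
    {v : σ → K} :
    IsSingularMember F G c v ↔ eval v (F + ∑ i, C (c i) * G i) = 0 ∧
      ∀ j, eval v (pderiv j (F + ∑ i, C (c i) * G i)) = 0 := by
  simp only [IsSingularMember, linearSystemEval_eq_eval, map_add (pderiv _), map_sum (pderiv _),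
    pderiv_C_mul]

lemma algHom_linearSystemEval {B' : Type*} [CommRing B'] [Algebra K B'] (φ : B →ₐ[K] B')
    (F : MvPolynomial σ K) (G : ι → MvPolynomial σ K) (t : ι → B) (y : σ → B) :
    φ (linearSystemEval F G t y) = linearSystemEval F G (φ ∘ t) (φ ∘ y) := by
  have h (p : MvPolynomial σ K) : φ (aeval y p) = aeval (φ ∘ y) p := comp_aeval_apply y φ p
  simp [linearSystemEval, h]

lemma algHom_rename {τ : Type*} (φ : MvPolynomial τ K →ₐ[K] B) (e : σ → τ)
    (p : MvPolynomial σ K) : φ (rename e p) = aeval (φ ∘ X ∘ e) p := by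
  rw [aeval_unique φ, aeval_rename, ← aeval_unique φ, Function.comp_assoc]

lemma incidenceIdeal_le_ker_iff {F : MvPolynomial σ K} {G : ι → MvPolynomial σ K}
    {φ : MvPolynomial (ι ⊕ σ) K →ₐ[K] B} :
    incidenceIdeal F G ≤ RingHom.ker φ ↔
      IsSingularMember F G (φ ∘ X ∘ Sum.inl) (φ ∘ X ∘ Sum.inr) := by
  simp [incidenceIdeal, Ideal.span_le, Set.insert_subset_iff, Set.range_subset_iff,
    algHom_linearSystemEval, IsSingularMember]

lemma D_linearSystemEval [Fintype σ] (F : MvPolynomial σ K) (G : ι → MvPolynomial σ K) (t : ι → B)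
    (y : σ → B) :
    KaehlerDifferential.D K B (linearSystemEval F G t y) =
      ∑ j, linearSystemEval (pderiv j F) (fun i => pderiv j (G i)) t y •
        KaehlerDifferential.D K B (y j) +
      ∑ i, aeval y (G i) • KaehlerDifferential.D K B (t i) := by
  simp only [linearSystemEval, map_add, map_sum, Derivation.leibniz, D_aeval_eq_sum, add_smul,
    Finset.sum_smul, Finset.smul_sum, mul_smul, Finset.sum_add_distrib]
  rw [Finset.sum_comm, add_assoc]

end IncidenceIdeal

section CharZero

variable [Finite σ] [Field K] [CharZero K]

lemma aeval_eq_zero_of_isSingularMember_of_algebraicIndependent {L : Type*} [Field L] [Algebra K L]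
    {F : MvPolynomial σ K} {G : ι → MvPolynomial σ K} {t : ι → L} {y : σ → L}
    (ht : AlgebraicIndependent K t) (hsing : IsSingularMember F G t y) (i : ι) :
    aeval y (G i) = 0 := by
  have := Fintype.ofFinite σ
  have hD := D_linearSystemEval F G t y
  simp only [hsing.1, hsing.2, map_zero, zero_smul, Finset.sum_const_zero, zero_add] at hD
  exact Fintype.linearIndependent_iff.mp (linearIndependent_D_of_algebraicIndependent ht) _
    hD.symm i

lemma exists_ne_zero_algHom_rename_inl_eq_zero {L : Type*} [Field L] [Algebra K L]
    {F : MvPolynomial σ K} {G : ι → MvPolynomial σ K} {φ : MvPolynomial (ι ⊕ σ) K →ₐ[K] L}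
    (hφ : incidenceIdeal F G ≤ RingHom.ker φ) {i : ι} (hi : φ (rename Sum.inr (G i)) ≠ 0) :
    ∃ P : MvPolynomial ι K, P ≠ 0 ∧ φ (rename Sum.inl P) = 0 := by
  have hdep : ¬AlgebraicIndependent K (φ ∘ X ∘ Sum.inl) := fun ht =>
    hi <| (algHom_rename φ _ _).trans <|
      aeval_eq_zero_of_isSingularMember_of_algebraicIndependent ht
        (incidenceIdeal_le_ker_iff.mp hφ) i
  simp only [algebraicIndependent_iff, not_forall] at hdep
  obtain ⟨P, hP, hP0⟩ := hdep
  exact ⟨P, hP0, (algHom_rename φ _ P).trans hP⟩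

lemma exists_ne_zero_rename_inl_mem_of_incidenceIdeal_le {F : MvPolynomial σ K}
    {G : ι → MvPolynomial σ K} {p : Ideal (MvPolynomial (ι ⊕ σ) K)} [p.IsPrime]
    (hp : incidenceIdeal F G ≤ p) {i : ι} (hi : rename Sum.inr (G i) ∉ p) :
    ∃ P : MvPolynomial ι K, P ≠ 0 ∧ rename Sum.inl P ∈ p := by
  let φ := IsScalarTower.toAlgHom K (MvPolynomial (ι ⊕ σ) K) p.ResidueField
  have mem_iff {q : MvPolynomial (ι ⊕ σ) K} : φ q = 0 ↔ q ∈ p :=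
    Ideal.algebraMap_residueField_eq_zero
  obtain ⟨P, hP0, hP⟩ := exists_ne_zero_algHom_rename_inl_eq_zero (φ := φ)
    (fun q hq => mem_iff.mpr (hp hq)) (mt mem_iff.mp hi)
  exact ⟨P, hP0, mem_iff.mp hP⟩

lemma exists_ne_zero_eval_eq_zero_of_isSingularMember (F : MvPolynomial σ K)
    (G : ι → MvPolynomial σ K) :
    ∃ P : MvPolynomial ι K, P ≠ 0 ∧ ∀ (c : ι → K) (v : σ → K), IsSingularMember F G c v →
      (∃ i, eval v (G i) ≠ 0) → eval c P = 0 := by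
  have hfin : (incidenceIdeal F G).minimalPrimes.Finite :=
    Ideal.finite_minimalPrimes_of_isNoetherianRing _ _
  have hex (p : Ideal (MvPolynomial (ι ⊕ σ) K)) (hp : p ∈ (incidenceIdeal F G).minimalPrimes) :
      ∃ P : MvPolynomial ι K, P ≠ 0 ∧ ∀ i, rename Sum.inr (G i) ∉ p → rename Sum.inl P ∈ p := by
    by_cases hG : ∃ i, rename Sum.inr (G i) ∉ p
    · have := hp.1.1
      obtain ⟨i, hi⟩ := hG
      obtain ⟨P, hP0, hP⟩ := exists_ne_zero_rename_inl_mem_of_incidenceIdeal_le hp.1.2 hi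
      exact ⟨P, hP0, fun _ _ => hP⟩
    · exact ⟨1, one_ne_zero, fun i hi => absurd ⟨i, hi⟩ hG⟩
  choose! P hP0 hP using hex
  refine ⟨∏ p ∈ hfin.toFinset, P p, Finset.prod_ne_zero_iff.mpr fun p hp =>
    hP0 p (hfin.mem_toFinset.mp hp), fun c v hsing ⟨i, hi⟩ => ?_⟩
  let φ : MvPolynomial (ι ⊕ σ) K →ₐ[K] K := aeval (Sum.elim c v)
  have φ_inl (q : MvPolynomial ι K) : φ (rename Sum.inl q) = eval c q := by
    simp [φ, aeval_rename, aeval_eq_eval]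
  have φ_inr (q : MvPolynomial σ K) : φ (rename Sum.inr q) = eval v q := by
    simp [φ, aeval_rename, aeval_eq_eval]
  have hker : incidenceIdeal F G ≤ RingHom.ker φ := incidenceIdeal_le_ker_iff.mpr <| by
    simpa [φ, Function.comp_def] using hsing
  have : (RingHom.ker φ).IsPrime := RingHom.ker_isPrime _
  obtain ⟨p, hp, hpφ⟩ := Ideal.exists_minimalPrimes_le hker
  have hPp : eval c (P p) = 0 :=
    (φ_inl _).symm.trans (hpφ (hP p hp i fun h => hi ((φ_inr _).symm.trans (hpφ h))))
  rw [map_prod]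
  exact Finset.prod_eq_zero (hfin.mem_toFinset.mpr hp) hPp

theorem bertini_exists_smooth_off_baseLocus (F : MvPolynomial σ K) (G : ι → MvPolynomial σ K) :
    ∃ c : ι → K, ∀ v : σ → K, eval v (F + ∑ i, C (c i) * G i) = 0 →
      (∀ j, eval v (pderiv j (F + ∑ i, C (c i) * G i)) = 0) → ∀ i, eval v (G i) = 0 := by
  obtain ⟨P, hP0, hP⟩ := exists_ne_zero_eval_eq_zero_of_isSingularMember F G
  obtain ⟨c, hc⟩ : ∃ c, eval c P ≠ 0 := by
    by_contra! h
    exact hP0 (MvPolynomial.funext fun c => by rw [h c, map_zero])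
  refine ⟨c, fun v h0 hd i => ?_⟩
  by_contra hi
  exact hc (hP c v (isSingularMember_iff_eval.mpr ⟨h0, hd⟩) ⟨i, hi⟩)

end CharZero

end LinearSystem

section CompleteIntersection

variable {σ K : Type*}

lemma rank_jacobian_le_one_of_pderiv_add_mul_eq_zero [Fintype σ] [CommRing K]
    [StrongRankCondition K] {f g h : MvPolynomial σ K} {v : σ → K}
    (hg : eval v g = 0) (hd : ∀ j, eval v (pderiv j (f + h * g)) = 0) :
    (Matrix.of ![fun j => eval v (pderiv j f), fun j => eval v (pderiv j g)]).rank ≤ 1 := by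
  have hrow (j : σ) : eval v (pderiv j f) = -eval v h * eval v (pderiv j g) := by
    have := hd j
    simp only [map_add, pderiv_mul, map_mul, hg, mul_zero, zero_add] at this
    linear_combination this
  have hfactor : Matrix.of ![fun j => eval v (pderiv j f), fun j => eval v (pderiv j g)] =
      Matrix.vecMulVec ![-eval v h, 1] fun j => eval v (pderiv j g) := by
    ext i j
    fin_cases i <;> simp [Matrix.vecMulVec_apply, hrow]
  exact hfactor ▸ Matrix.rank_vecMulVec_le _ _

lemma exists_isHomogeneous_forall_singular_imp_eval_eq_zero [Finite σ] [Field K] [CharZero K]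
    (f g : MvPolynomial σ K) (d : ℕ) :
    ∃ h : MvPolynomial σ K, h.IsHomogeneous d ∧ ∀ v ≠ 0, eval v (f + h * g) = 0 →
      (∀ j, eval v (pderiv j (f + h * g)) = 0) → eval v g = 0 := by
  have := Fintype.ofFinite σ
  obtain ⟨c, hc⟩ := bertini_exists_smooth_off_baseLocus f fun i => X i ^ d * g
  have hsum : ∑ i, C (c i) * (X i ^ d * g) = (∑ i, C (c i) * X i ^ d) * g := by
    simp only [Finset.sum_mul, mul_assoc]
  rw [hsum] at hc
  refine ⟨∑ i, C (c i) * X i ^ d,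
    IsHomogeneous.sum _ _ _ fun i _ => (isHomogeneous_X_pow i d).C_mul (c i),
    fun v hv h0 hd => ?_⟩
  obtain ⟨i, hi⟩ := Function.ne_iff.mp hv
  have hXg := hc v h0 hd i
  rw [map_mul, map_pow, eval_X] at hXg
  exact (mul_eq_zero.mp hXg).resolve_left (pow_ne_zero d hi)

theorem stmt_8_general [Fintype σ] [Field K] [CharZero K] (f g : MvPolynomial σ K) (d : ℕ) :
    ∃ h : MvPolynomial σ K, h.IsHomogeneous d ∧
      (∀ v, eval v (f + h * g) = 0 ∧ eval v g = 0 ↔ eval v f = 0 ∧ eval v g = 0) ∧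
      ∀ v ≠ 0, (eval v (f + h * g) = 0 ∧ ∀ j, eval v (pderiv j (f + h * g)) = 0) →
        eval v f = 0 ∧ eval v g = 0 ∧
          (Matrix.of ![fun j => eval v (pderiv j f), fun j => eval v (pderiv j g)]).rank ≤ 1 := by
  obtain ⟨h, hh, hsing⟩ := exists_isHomogeneous_forall_singular_imp_eval_eq_zero f g d
  have hX (v : σ → K) : eval v (f + h * g) = 0 ∧ eval v g = 0 ↔ eval v f = 0 ∧ eval v g = 0 :=
    and_congr_left fun hg => by rw [map_add, map_mul, hg, mul_zero, add_zero]
  refine ⟨h, hh, hX, fun v hv ⟨h0, hd⟩ => ?_⟩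
  have hg := hsing v hv h0 hd
  exact ⟨((hX v).mp ⟨h0, hg⟩).1, hg, rank_jacobian_le_one_of_pderiv_add_mul_eq_zero hg hd⟩

end CompleteIntersection

theorem stmt_8 (n k : ℕ) (f g : MvPolynomial (Fin 6) ℂ)
    (hf : f.IsHomogeneous n) (hg : g.IsHomogeneous k)
    (hk : 1 ≤ k) (hkn : k ≤ n)
    (hfin : (SingCI6 f g).Finite) :
    ∃ (lam : ℂ) (h : MvPolynomial (Fin 6) ℂ), lam ≠ 0 ∧ h.IsHomogeneous (n - k) ∧
      ({p : ProjPt 5 | eval p.rep (C lam * f + h * g) = 0 ∧ eval p.rep g = 0}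
        = {p : ProjPt 5 | eval p.rep f = 0 ∧ eval p.rep g = 0}) ∧
      ∀ p : ProjPt 5,
        (eval p.rep (C lam * f + h * g) = 0 ∧
          ∀ j : Fin 6, eval p.rep (pderiv j (C lam * f + h * g)) = 0) →
        p ∈ SingCI6 f g := by
  obtain ⟨h, hh, hX, hsing⟩ := stmt_8_general f g (n - k)
  refine ⟨1, h, one_ne_zero, hh, ?_⟩
  rw [C_1, one_mul]
  exact ⟨Set.ext fun p => hX p.rep, fun p => hsing p.rep p.rep_nonzero⟩
end
end

section
/- Let f, g ∈ ℂ[x_0,…,x_4] be homogeneous of degrees n and 2r respectively with 2r ≥ n ≥ 2, such that the hypersurface {f = 0} ⊂ ℙ⁴ is smooth; let S = {f = g = 0} ⊂ ℙ⁴(ℂ) and suppose that Sing(S) is finite. Then there exist λ ∈ ℂ \ {0} and a homogeneous polynomial h ∈ ℂ[x_0,…,x_4] of degree 2r−n such that, setting ĝ = λg + hf, one has {f = ĝ = 0} = S and every point P ∈ ℙ⁴(ℂ) at which ĝ and all partial derivatives ∂ĝ/∂x_j vanish belongs to Sing(S). -/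
open MvPolynomial

noncomputable section

/-!
Take `h = ∑ i, c i * X i ^ d` with `d = 2 * r - n`. By Bertini's theorem, for general `c` the
singular points of `g + h * f = g + ∑ i, c i * (X i ^ d * f)` lie in the base locus of the system
`X i ^ d * f`, which in projective space is `{f = 0}`. At a point with `f = 0`, the relations
`g + h * f = 0` and `∇(g + h * f) = 0` become `g = 0` and `∇g = -h ∇f`, so the point is in
`Sing(S)`.

Bertini's theorem is first proved at the generic point, where the `c i` are indeterminates and
points have coordinates in an algebraic closure `L` of `k(c)`. In characteristic zero, `∂/∂c i`
extends to a derivation `D` of `L`. If `z` is a singular point of `g + ∑ i, c i * s i`, then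
applying `D` to `g(z) + ∑ i, c i * s i(z) = 0` leaves only `s i(z) = 0`, since the terms containing
`D (z j)` carry the factor `∂ⱼ(g + ∑ i, c i * s i)(z) = 0`. The Nullstellensatz turns this into an
identity over `k[c]` up to a denominator, and the identity specializes to every `c` at which that
denominator does not vanish.
-/

section Specialization

variable {A σ : Type*} [CommRing A] [IsDomain A] [Finite σ]
  (L : Type*) [Field L] [IsAlgClosed L] [Algebra A L] [FaithfulSMul A L]

theorem exists_C_mul_pow_mem_of_forall_aeval_eq_zero (I : Ideal (MvPolynomial σ A))
    (p : MvPolynomial σ A) (hp : ∀ z : σ → L, I ≤ RingHom.ker (aeval z) → aeval z p = 0) :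
    ∃ a : A, a ≠ 0 ∧ ∃ N : ℕ, C a * p ^ N ∈ I := by
  let : Algebra (MvPolynomial σ A) (MvPolynomial σ (FractionRing A)) := algebraMvPolynomial
  let : Algebra (FractionRing A) L := FractionRing.liftAlgebra A L
  let φ := algebraMap (MvPolynomial σ A) (MvPolynomial σ (FractionRing A))
  have aeval_φ (z : σ → L) (F : MvPolynomial σ A) : aeval z (φ F) = aeval z F :=
    aeval_map_algebraMap _ z F
  have mem_radical : φ p ∈ (I.map φ).radical := by
    rw [← vanishingIdeal_zeroLocus_eq_radical (K := L)]
    intro z hz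
    rw [aeval_φ]
    exact hp z fun F hF => (aeval_φ z F).symm.trans (hz _ (Ideal.mem_map_of_mem φ hF))
  obtain ⟨N, hN⟩ := mem_radical
  rw [← map_pow, IsLocalization.algebraMap_mem_map_algebraMap_iff
    ((nonZeroDivisors A).map (C (σ := σ)))] at hN
  obtain ⟨_, ⟨a, ha, rfl⟩, hmem⟩ := hN
  exact ⟨a, nonZeroDivisors.ne_zero ha, N, hmem⟩

theorem exists_ne_zero_forall_eval₂Hom_eq_zero {B τ : Type*} [CommRing B] [IsDomain B] [Finite τ]
    (I : Ideal (MvPolynomial σ A)) (p : τ → MvPolynomial σ A)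
    (hp : ∀ z : σ → L, I ≤ RingHom.ker (aeval z) → ∀ t, aeval z (p t) = 0) :
    ∃ a : A, a ≠ 0 ∧ ∀ φ : A →+* B, φ a ≠ 0 →
      ∀ v : σ → B, I ≤ RingHom.ker (eval₂Hom φ v) → ∀ t, eval₂Hom φ v (p t) = 0 := by
  have := Fintype.ofFinite τ
  choose a ha N hmem using fun t =>
    exists_C_mul_pow_mem_of_forall_aeval_eq_zero L I (p t) fun z hz => hp z hz t
  refine ⟨∏ t, a t, Finset.prod_ne_zero_iff.2 fun t _ => ha t, fun φ hφ v hv t => ?_⟩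
  rw [map_prod, Finset.prod_ne_zero_iff] at hφ
  have hprod : φ (a t) * eval₂Hom φ v (p t) ^ N t = 0 := by
    simpa only [map_mul, map_pow, eval₂Hom_C] using RingHom.mem_ker.1 (hv (hmem t))
  exact eq_zero_of_pow_eq_zero ((mul_eq_zero.1 hprod).resolve_left (hφ t (Finset.mem_univ t)))

end Specialization

section Derivations

theorem exists_derivation_extending {R A B M : Type*} [CommRing R] [CommRing A] [CommRing B]
    [Algebra R A] [Algebra R B] [Algebra A B] [IsScalarTower R A B] [Algebra.FormallyEtale A B]
    [AddCommGroup M] [Module R M] [Module A M] [Module B M] [IsScalarTower R A M]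
    [IsScalarTower R B M] [IsScalarTower A B M] (D : Derivation R A M) :
    ∃ D' : Derivation R B M, ∀ a, D' (algebraMap A B a) = D a := by
  let e := (KaehlerDifferential.tensorKaehlerEquivOfFormallyEtale R A B).symm.toLinearMap
  refine ⟨(D.liftKaehlerDifferential.liftBaseChange B ∘ₗ e).compDer (KaehlerDifferential.D R B),
    fun a => ?_⟩
  simp [e, KaehlerDifferential.tensorKaehlerEquivOfFormallyEtale_symm_D_algebraMap]

theorem formallyEtale_algebraicClosure_fractionRing (A : Type*) [CommRing A] [IsDomain A]
    [CharZero A] : Algebra.FormallyEtale A (AlgebraicClosure (FractionRing A)) :=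
  have : CharZero (FractionRing A) := IsFractionRing.charZero A
  have : Algebra.FormallyEtale A (FractionRing A) := .of_isLocalization (nonZeroDivisors A)
  have : Algebra.FormallyEtale (FractionRing A) (AlgebraicClosure (FractionRing A)) :=
    .of_isSeparable _ _
  .comp A (FractionRing A) _

theorem derivation_aeval {R B M σ : Type*} [CommSemiring R] [CommSemiring B] [Algebra R B]
    [AddCommMonoid M] [Module R M] [Module B M] [Fintype σ] (D : Derivation R B M) (z : σ → B)
    (p : MvPolynomial σ R) :
    D (aeval z p) = ∑ j, aeval z (pderiv j p) • D (z j) := by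
  classical
  induction p using MvPolynomial.induction_on with
  | C a => simp
  | add p q hp hq => simp only [map_add, hp, hq, add_smul, Finset.sum_add_distrib]
  | mul_X p i hp =>
    simp only [map_mul, aeval_X, Derivation.leibniz, hp, smul_eq_mul, pderiv_X, map_add, add_smul,
      Finset.sum_add_distrib, Finset.smul_sum, Pi.single_apply, apply_ite, map_one, map_zero]
    simp [mul_smul]

end Derivations

section Bertini

/-- The ideal generated by a polynomial and its partial derivatives, whose zeros are the singular
points of the polynomial. -/
def singularIdeal {A σ : Type*} [CommRing A] (F : MvPolynomial σ A) : Ideal (MvPolynomial σ A) :=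
  Ideal.span (insert F (Set.range fun j => pderiv j F))

theorem singularIdeal_le_ker_iff {A B σ E : Type*} [CommRing A] [Semiring B]
    [FunLike E (MvPolynomial σ A) B] [RingHomClass E (MvPolynomial σ A) B]
    {F : MvPolynomial σ A} {φ : E} :
    singularIdeal F ≤ RingHom.ker φ ↔ φ F = 0 ∧ ∀ j, φ (pderiv j F) = 0 := by
  simp [singularIdeal, Ideal.span_le, Set.insert_subset_iff, Set.range_subset_iff]

variable {k σ ι : Type*}

theorem eval₂Hom_eval_map_C [CommSemiring k] (c : ι → k) (v : σ → k) (p : MvPolynomial σ k) :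
    eval₂Hom (eval c) v (map (C : k →+* MvPolynomial ι k) p) = eval v p := by
  have hC : (eval c).comp (C : k →+* MvPolynomial ι k) = RingHom.id k := by ext; simp
  rw [eval₂Hom_map_hom, hC]
  rfl

variable [Fintype ι]

/-- The generic member `g + ∑ i, c i * s i` of the linear system spanned by the `s i` and translated
by `g`. Its parameters `c i` are the variables of the coefficient ring `MvPolynomial ι k`. -/
def genericMember [CommRing k] (g : MvPolynomial σ k) (s : ι → MvPolynomial σ k) :
    MvPolynomial σ (MvPolynomial ι k) :=
  map C g + ∑ i, C (X i) * map C (s i)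

theorem pderiv_genericMember [CommRing k] (g : MvPolynomial σ k) (s : ι → MvPolynomial σ k)
    (j : σ) :
    pderiv j (genericMember g s) = genericMember (pderiv j g) fun i => pderiv j (s i) := by
  simp [genericMember, pderiv_map]

theorem eval₂Hom_eval_genericMember [CommRing k] (g : MvPolynomial σ k)
    (s : ι → MvPolynomial σ k) (c : ι → k) (v : σ → k) :
    eval₂Hom (eval c) v (genericMember g s) = eval v (g + ∑ i, C (c i) * s i) := by
  simp only [genericMember, map_add, map_sum, map_mul, eval₂Hom_eval_map_C, eval₂Hom_C, eval_X,
    eval_C]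

theorem aeval_genericMember [CommRing k] {L : Type*} [CommRing L] [Algebra k L]
    [Algebra (MvPolynomial ι k) L] [IsScalarTower k (MvPolynomial ι k) L]
    (g : MvPolynomial σ k) (s : ι → MvPolynomial σ k) (z : σ → L) :
    aeval z (genericMember g s) =
      aeval z g + ∑ i, algebraMap (MvPolynomial ι k) L (X i) * aeval z (s i) := by
  have aeval_map_C (p : MvPolynomial σ k) :
      aeval z (map (C : k →+* MvPolynomial ι k) p) = aeval z p :=
    aeval_map_algebraMap _ z p
  simp only [genericMember, map_add, map_sum, map_mul, aeval_map_C, aeval_C]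

theorem derivation_aeval_genericMember [CommRing k] [Fintype σ] {L : Type*} [CommRing L]
    [Algebra k L] [Algebra (MvPolynomial ι k) L] [IsScalarTower k (MvPolynomial ι k) L]
    (D : Derivation k L L) (g : MvPolynomial σ k) (s : ι → MvPolynomial σ k) (z : σ → L) :
    D (aeval z (genericMember g s)) =
      ∑ i, aeval z (s i) * D (algebraMap (MvPolynomial ι k) L (X i)) +
        ∑ j, aeval z (pderiv j (genericMember g s)) * D (z j) := by
  have chain_rule (p : MvPolynomial σ k) :
      D (aeval z p) = ∑ j, aeval z (pderiv j p) * D (z j) := derivation_aeval D z p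
  have chain_rule_system :
      ∑ j, (∑ i, algebraMap (MvPolynomial ι k) L (X i) * aeval z (pderiv j (s i))) * D (z j) =
        ∑ i, algebraMap (MvPolynomial ι k) L (X i) * D (aeval z (s i)) := by
    simp only [chain_rule, Finset.mul_sum, Finset.sum_mul, mul_assoc]
    exact Finset.sum_comm
  simp only [pderiv_genericMember, aeval_genericMember, map_add, map_sum, Derivation.leibniz,
    smul_eq_mul, add_mul, Finset.sum_add_distrib, chain_rule_system, ← chain_rule]
  ring

theorem aeval_eq_zero_of_singularIdeal_genericMember_le_ker [CommRing k] [Finite σ] {L : Type*}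
    [CommRing L] [Algebra k L] [Algebra (MvPolynomial ι k) L]
    [IsScalarTower k (MvPolynomial ι k) L] [Algebra.FormallyEtale (MvPolynomial ι k) L]
    {g : MvPolynomial σ k} {s : ι → MvPolynomial σ k} {z : σ → L}
    (hz : singularIdeal (genericMember g s) ≤ RingHom.ker (aeval z)) (i : ι) :
    aeval z (s i) = 0 := by
  classical
  have := Fintype.ofFinite σ
  obtain ⟨D, hD⟩ := exists_derivation_extending (B := L)
    (mkDerivation k (Pi.single i 1 : ι → L))
  obtain ⟨hmem, hpderiv⟩ := singularIdeal_le_ker_iff.1 hz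
  simpa [hmem, hpderiv, hD, mkDerivation_X, Pi.single_apply]
    using (derivation_aeval_genericMember D g s z).symm

theorem bertini [CommRing k] [IsDomain k] [CharZero k] [Finite σ] (g : MvPolynomial σ k)
    (s : ι → MvPolynomial σ k) :
    ∃ Δ : MvPolynomial ι k, Δ ≠ 0 ∧ ∀ c : ι → k, eval c Δ ≠ 0 → ∀ v : σ → k,
      eval v (g + ∑ i, C (c i) * s i) = 0 →
      (∀ j, eval v (pderiv j (g + ∑ i, C (c i) * s i)) = 0) → ∀ i, eval v (s i) = 0 := by
  have := formallyEtale_algebraicClosure_fractionRing (MvPolynomial ι k)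
  have : FaithfulSMul (MvPolynomial ι k) (AlgebraicClosure (FractionRing (MvPolynomial ι k))) :=
    .trans _ (FractionRing (MvPolynomial ι k)) _
  obtain ⟨Δ, hΔ, hspec⟩ := exists_ne_zero_forall_eval₂Hom_eq_zero (B := k)
    (AlgebraicClosure (FractionRing (MvPolynomial ι k))) (singularIdeal (genericMember g s))
    (fun i => map C (s i)) fun z hz i =>
      (aeval_map_algebraMap _ z (s i)).trans
        (aeval_eq_zero_of_singularIdeal_genericMember_le_ker hz i)
  refine ⟨Δ, hΔ, fun c hc v hv hdv i => ?_⟩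
  rw [← eval₂Hom_eval_map_C c]
  refine hspec (eval c) hc v (singularIdeal_le_ker_iff.2 ⟨?_, fun j => ?_⟩) i
  · rw [eval₂Hom_eval_genericMember, hv]
  · rw [pderiv_genericMember, eval₂Hom_eval_genericMember, ← hdv j]
    simp

end Bertini

theorem exists_eval_ne_zero {R σ : Type*} [CommRing R] [IsDomain R] [Infinite R]
    {p : MvPolynomial σ R} (hp : p ≠ 0) : ∃ c, eval c p ≠ 0 := by
  contrapose! hp
  exact MvPolynomial.funext fun c => by rw [hp c, map_zero]

theorem rank_jacobian_le_one_of_forall_eval_pderiv_eq_zero {k σ : Type*} [CommRing k]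
    [Nontrivial k] [Fintype σ] {f g h : MvPolynomial σ k} {v : σ → k} (hf : eval v f = 0)
    (hpderiv : ∀ j, eval v (pderiv j (g + h * f)) = 0) :
    (Matrix.of ![fun j => eval v (pderiv j f), fun j => eval v (pderiv j g)]).rank ≤ 1 := by
  have hg (j : σ) : eval v (pderiv j g) = -eval v h * eval v (pderiv j f) := by
    have hj := hpderiv j
    simp only [map_add, map_mul, Derivation.leibniz, smul_eq_mul, hf, zero_mul, add_zero] at hj
    rw [neg_mul, eq_neg_of_add_eq_zero_left hj]
  have hJ : Matrix.of ![fun j => eval v (pderiv j f), fun j => eval v (pderiv j g)] =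
      Matrix.vecMulVec ![1, -eval v h] fun j => eval v (pderiv j f) := by
    ext i j
    fin_cases i <;> simp [Matrix.vecMulVec, hg]
  rw [hJ]
  exact Matrix.rank_vecMulVec_le _ _

theorem stmt_9_general {k σ : Type*} [CommRing k] [IsDomain k] [CharZero k] [Fintype σ]
    (f g : MvPolynomial σ k) (d : ℕ) :
    ∃ h : MvPolynomial σ k, h.IsHomogeneous d ∧ ∀ v : σ → k, v ≠ 0 →
      eval v (g + h * f) = 0 → (∀ j, eval v (pderiv j (g + h * f)) = 0) →
      eval v f = 0 ∧ eval v g = 0 ∧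
        (Matrix.of ![fun j => eval v (pderiv j f), fun j => eval v (pderiv j g)]).rank ≤ 1 := by
  obtain ⟨Δ, hΔ, hbertini⟩ := bertini g fun i => X i ^ d * f
  obtain ⟨c, hc⟩ := exists_eval_ne_zero hΔ
  have hsum : g + (∑ i, C (c i) * X i ^ d) * f = g + ∑ i, C (c i) * (X i ^ d * f) := by
    simp only [Finset.sum_mul, mul_assoc]
  refine ⟨∑ i, C (c i) * X i ^ d, .sum _ _ _ fun i _ => (isHomogeneous_X_pow i d).C_mul _,
    fun v hv hmem hpderiv => ?_⟩
  obtain ⟨i, hi⟩ := Function.ne_iff.1 hv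
  have hf : eval v f = 0 := by
    have hXf := hbertini c hc v (hsum ▸ hmem) (fun j => hsum ▸ hpderiv j) i
    rw [map_mul, map_pow, eval_X] at hXf
    exact (mul_eq_zero.1 hXf).resolve_left (pow_ne_zero d hi)
  exact ⟨hf, by simpa only [map_add, map_mul, hf, mul_zero, add_zero] using hmem,
    rank_jacobian_le_one_of_forall_eval_pderiv_eq_zero hf hpderiv⟩

theorem stmt_9 (n r : ℕ) (f g : MvPolynomial (Fin 5) ℂ)
    (hf : f.IsHomogeneous n) (hg : g.IsHomogeneous (2 * r))
    (hn : 2 ≤ n) (hrn : n ≤ 2 * r)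
    (hFsmooth : ∀ p : ProjPt 4, eval p.rep f = 0 → ∃ j : Fin 5, eval p.rep (pderiv j f) ≠ 0)
    (hfin : (SingCI5 f g).Finite) :
    ∃ (lam : ℂ) (h : MvPolynomial (Fin 5) ℂ), lam ≠ 0 ∧ h.IsHomogeneous (2 * r - n) ∧
      ({p : ProjPt 4 | eval p.rep f = 0 ∧ eval p.rep (C lam * g + h * f) = 0}
        = {p : ProjPt 4 | eval p.rep f = 0 ∧ eval p.rep g = 0}) ∧
      ∀ p : ProjPt 4,
        (eval p.rep (C lam * g + h * f) = 0 ∧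
          ∀ j : Fin 5, eval p.rep (pderiv j (C lam * g + h * f)) = 0) →
        p ∈ SingCI5 f g := by
  obtain ⟨h, hh, hsing⟩ := stmt_9_general f g (2 * r - n)
  exact ⟨1, h, one_ne_zero, hh, Set.ext fun p => and_congr_right fun hfp => by simp [hfp],
    fun p hp => hsing p.rep p.rep_nonzero (by simpa using hp.1) (by simpa using hp.2)⟩
end
end
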